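/- arXiv:1903.01761 — 3 statements merged into one kernel-verified Lean document; each statement's English description precedes it below -/
import Mathlib

section
/- Let K be a compact Hausdorff topological space without isolated points, let E be a finite-dimensional subspace of C(K) (real-valued continuous functions with the sup norm) and let ε > 0. Then the set A = {g ∈ S_{C(K)} : ‖f + λg‖ > (1 − ε)(‖f‖ + |λ|) for all f ∈ E and all λ ∈ ℝ} is weakly sequentially dense in B_{C(K)}: for every h ∈ B_{C(K)} there exists a sequence (gₙ) in A converging weakly to h. -/
open Filter

/-!
Evaluation at points is a norm-continuous map from `K` into the dual of the finite-dimensional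
space `E`, so `K` has a finite open cover on each member of which every `f ∈ E` varies by at most
`ε ‖f‖`. A function `g` of norm one which takes both values `1` and `-1` on each member of the
cover then satisfies `‖f + l • g‖ ≥ ‖f‖ + |l| - ε ‖f‖`: near a point where `|f|` attains `‖f‖`, the
function `l • g` takes the value `±|l|` with the sign of `f`. As `K` has no isolated points, `h`
can be modified into such a function inside any of a sequence of pairwise disjoint open sets. The
resulting functions differ from `h` by a bounded sequence with disjoint supports, which is weakly
null.
-/

open Set Function
open scoped Topology

section PerfectSpace

variable {X ι : Type*} [TopologicalSpace X]

lemma perfectSpace_iff_forall_not_isOpen_singleton :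
    PerfectSpace X ↔ ∀ x : X, ¬ IsOpen ({x} : Set X) := by
  simp only [perfectSpace_iff_forall_not_isolated, isOpen_singleton_iff_punctured_nhds, neBot_iff,
    ne_eq]

lemma infinite_of_isOpen_of_nonempty [T1Space X] [PerfectSpace X] {U : Set X} (hU : IsOpen U)
    (hne : U.Nonempty) : U.Infinite :=
  have ⟨x, hx⟩ := hne
  infinite_of_mem_nhds x (hU.mem_nhds hx)

lemma exists_injective_forall_mem_of_infinite {α : Type*} [Finite ι] {A : ι → Set α}
    (hA : ∀ i, (A i).Infinite) : ∃ x : ι → α, Injective x ∧ ∀ i, x i ∈ A i := by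
  classical
  cases nonempty_fintype ι
  choose t htA ht using fun i => (hA i).exists_subset_card_eq (Fintype.card ι)
  have hall : ∀ s : Finset ι, s.card ≤ (s.biUnion t).card := by
    intro s
    obtain rfl | ⟨i, hi⟩ := s.eq_empty_or_nonempty
    · exact Nat.zero_le _
    · calc s.card ≤ Fintype.card ι := s.card_le_univ
        _ = (t i).card := (ht i).symm
        _ ≤ (s.biUnion t).card := Finset.card_le_card (Finset.subset_biUnion_of_mem t hi)
  obtain ⟨x, hx, hxt⟩ := (Finset.all_card_le_biUnion_card_iff_exists_injective t).1 hall
  exact ⟨x, hx, fun i => htA i (hxt i)⟩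

variable [T2Space X] [PerfectSpace X]

lemma exists_pairwise_disjoint_isOpen_subset [Finite ι] {U : ι → Set X} (hU : ∀ i, IsOpen (U i))
    (hne : ∀ i, (U i).Nonempty) :
    ∃ V : ι → Set X, (∀ i, IsOpen (V i)) ∧ (∀ i, (V i).Nonempty) ∧ (∀ i, V i ⊆ U i) ∧
      Pairwise (Disjoint on V) := by
  obtain ⟨x, hx, hxU⟩ := exists_injective_forall_mem_of_infinite fun i =>
    infinite_of_isOpen_of_nonempty (hU i) (hne i)
  obtain ⟨O, hO, hdisj⟩ := (finite_range x).t2_separation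
  refine ⟨fun i => O (x i) ∩ U i, fun i => (hO _).2.inter (hU i),
    fun i => ⟨x i, (hO _).1, hxU i⟩, fun i => inter_subset_right, fun i j hij => ?_⟩
  exact (hdisj (mem_range_self i) (mem_range_self j) (hx.ne hij)).mono inter_subset_left
    inter_subset_left

lemma exists_seq_pairwise_disjoint_isOpen_subset {U : Set X} (hU : IsOpen U) (hne : U.Nonempty) :
    ∃ V : ℕ → Set X, (∀ n, IsOpen (V n)) ∧ (∀ n, (V n).Nonempty) ∧ (∀ n, V n ⊆ U) ∧
      Pairwise (Disjoint on V) := by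
  have : Infinite U := (infinite_of_isOpen_of_nonempty hU hne).to_subtype
  obtain ⟨V, hVinf, hV, hdisj⟩ := exists_seq_infinite_isOpen_pairwise_disjoint U
  exact ⟨fun n => (↑) '' V n, fun n => hU.isOpenMap_subtype_val _ (hV n),
    fun n => (hVinf n).nonempty.image _, fun n => Subtype.coe_image_subset U (V n),
    fun m n hmn => (disjoint_image_iff Subtype.val_injective).2 (hdisj hmn)⟩

lemma exists_pairwise_disjoint_seq_isOpen_subset [Finite ι] {U : ι → Set X}
    (hU : ∀ i, IsOpen (U i)) (hne : ∀ i, (U i).Nonempty) :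
    ∃ V : ι → ℕ → Set X, (∀ i n, IsOpen (V i n)) ∧ (∀ i n, (V i n).Nonempty) ∧
      (∀ i n, V i n ⊆ U i) ∧ Pairwise (Disjoint on uncurry V) := by
  obtain ⟨O, hO, hOne, hOU, hOdisj⟩ := exists_pairwise_disjoint_isOpen_subset hU hne
  choose V hV hVne hVO hVdisj using fun i =>
    exists_seq_pairwise_disjoint_isOpen_subset (hO i) (hOne i)
  refine ⟨V, hV, hVne, fun i n => (hVO i n).trans (hOU i), ?_⟩
  rintro ⟨i, m⟩ ⟨j, n⟩ hne
  obtain rfl | hij := eq_or_ne i j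
  · exact hVdisj i fun hmn => hne (congrArg (Prod.mk i) hmn)
  · exact (hOdisj hij).mono (hVO i m) (hVO j n)

end PerfectSpace

section Modification

variable {X : Type*} [TopologicalSpace X] [NormalSpace X]

lemma exists_eqOn_isClosed_eqOn_compl_forall_mem_convex {F : Type*} [AddCommGroup F] [Module ℝ F]
    [TopologicalSpace F] [IsTopologicalAddGroup F] [ContinuousSMul ℝ F] {S : Set F}
    (hS : Convex ℝ S) {h w : C(X, F)} (hh : ∀ x, h x ∈ S) (hw : ∀ x, w x ∈ S) {C W : Set X}
    (hC : IsClosed C) (hW : IsOpen W) (hCW : C ⊆ W) :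
    ∃ g : C(X, F), (∀ x, g x ∈ S) ∧ EqOn g w C ∧ EqOn g h Wᶜ := by
  obtain ⟨u, hu0, hu1, hu⟩ := exists_continuous_zero_one_of_isClosed hW.isClosed_compl hC
    (disjoint_compl_left_iff_subset.2 hCW)
  refine ⟨⟨fun x => AffineMap.lineMap (h x) (w x) (u x), by fun_prop⟩, fun x => ?_, fun x hx => ?_,
    fun x hx => ?_⟩
  · exact hS.lineMap_mem (hh x) (hw x) (hu x)
  · simp [hu1 hx]
  · simp [hu0 hx]

lemma exists_eqOn_const_eqOn_compl_forall_mem_Icc {a b : ℝ} {h : C(X, ℝ)}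
    (hh : ∀ x, h x ∈ Icc a b) {P Q W : Set X} (hP : IsClosed P) (hQ : IsClosed Q)
    (hPQ : Disjoint P Q) (hW : IsOpen W) (hPW : P ⊆ W) (hQW : Q ⊆ W) :
    ∃ g : C(X, ℝ), (∀ x, g x ∈ Icc a b) ∧ EqOn g (const X a) P ∧ EqOn g (const X b) Q ∧
      EqOn g h Wᶜ := by
  obtain hX | ⟨⟨x⟩⟩ := isEmpty_or_nonempty X
  · exact ⟨h, hh, fun x => hX.elim x, fun x => hX.elim x, fun x => hX.elim x⟩
  obtain ⟨w, hwP, hwQ, hw⟩ := exists_bounded_mem_Icc_of_closed_of_le hP hQ hPQ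
    ((hh x).1.trans (hh x).2)
  obtain ⟨g, hg, hgw, hgh⟩ := exists_eqOn_isClosed_eqOn_compl_forall_mem_convex (convex_Icc a b)
    hh (w := w) hw (hP.union hQ) hW (union_subset hPW hQW)
  exact ⟨g, hg, (hgw.mono subset_union_left).trans hwP, (hgw.mono subset_union_right).trans hwQ,
    hgh⟩

end Modification

section DisjointSupport

variable {K ι F : Type*} [TopologicalSpace K] [CompactSpace K] [NormedAddCommGroup F]
  {d : ι → C(K, F)} {C : ℝ}

lemma norm_sum_le_of_pairwise_disjoint_support (hC : 0 ≤ C) (hd : ∀ i, ‖d i‖ ≤ C)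
    (hdisj : Pairwise (Disjoint on fun i => support (d i))) (s : Finset ι) :
    ‖∑ i ∈ s, d i‖ ≤ C := by
  refine (ContinuousMap.norm_le _ hC).2 fun x => ?_
  rw [ContinuousMap.sum_apply]
  by_cases hx : ∃ i ∈ s, d i x ≠ 0
  · obtain ⟨i, hi, hix⟩ := hx
    have hzero : ∀ j ∈ s, j ≠ i → d j x = 0 := fun j _ hji =>
      notMem_support.1 (disjoint_right.1 (hdisj hji) hix)
    rw [Finset.sum_eq_single_of_mem i hi hzero]
    exact ((d i).norm_coe_le_norm x).trans (hd i)
  · push Not at hx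
    rwa [Finset.sum_eq_zero hx, norm_zero]

variable [NormedSpace ℝ F]

lemma summable_abs_apply_of_pairwise_disjoint_support (hd : ∀ i, ‖d i‖ ≤ C)
    (hdisj : Pairwise (Disjoint on fun i => support (d i))) (φ : C(K, F) →L[ℝ] ℝ) :
    Summable fun i => |φ (d i)| := by
  obtain hι | ⟨⟨i₀⟩⟩ := isEmpty_or_nonempty ι
  · exact summable_empty
  have hC : 0 ≤ C := (norm_nonneg _).trans (hd i₀)
  let a : ι → ℝ := fun i => SignType.sign (φ (d i))
  have ha : ∀ i, ‖a i‖ ≤ 1 := fun i => by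
    rcases lt_trichotomy (φ (d i)) 0 with h | h | h <;> simp [a, h]
  have hnorm : ∀ i, ‖a i • d i‖ ≤ C := fun i =>
    (norm_smul_le _ _).trans ((mul_le_of_le_one_left (norm_nonneg _) (ha i)).trans (hd i))
  have hsupp : Pairwise (Disjoint on fun i => support (a i • d i)) := hdisj.mono fun i j hij =>
    hij.mono (support_const_smul_subset (a i) (d i)) (support_const_smul_subset (a j) (d j))
  refine summable_of_sum_le (c := ‖φ‖ * C) (fun i => abs_nonneg _) fun s => ?_
  calc ∑ i ∈ s, |φ (d i)| = φ (∑ i ∈ s, a i • d i) := by simp [a, sign_mul_self]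
    _ ≤ ‖φ (∑ i ∈ s, a i • d i)‖ := Real.le_norm_self _
    _ ≤ ‖φ‖ * C :=
      φ.le_opNorm_of_le (norm_sum_le_of_pairwise_disjoint_support hC hnorm hsupp s)

lemma tendsto_cofinite_zero_of_pairwise_disjoint_support (hd : ∀ i, ‖d i‖ ≤ C)
    (hdisj : Pairwise (Disjoint on fun i => support (d i))) (φ : C(K, F) →L[ℝ] ℝ) :
    Tendsto (fun i => φ (d i)) cofinite (𝓝 0) :=
  (tendsto_zero_iff_abs_tendsto_zero _).2
    (summable_abs_apply_of_pairwise_disjoint_support hd hdisj φ).tendsto_cofinite_zero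

lemma tendsto_apply_of_eqOn_compl_of_pairwise_disjoint {g : ι → C(K, F)} {h : C(K, F)}
    (hg : ∀ i, ‖g i‖ ≤ C) {W : ι → Set K} (hW : Pairwise (Disjoint on W))
    (hgh : ∀ i, EqOn (g i) h (W i)ᶜ) (φ : C(K, F) →L[ℝ] ℝ) :
    Tendsto (fun i => φ (g i)) cofinite (𝓝 (φ h)) := by
  have hsupp : ∀ i, support (g i - h) ⊆ W i := fun i => support_subset_iff'.2 fun x hx =>
    sub_eq_zero.2 (hgh i hx)
  have hbound : ∀ i, ‖g i - h‖ ≤ C + ‖h‖ := fun i => norm_sub_le_of_le (hg i) le_rfl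
  have hnull := tendsto_cofinite_zero_of_pairwise_disjoint_support hbound
    (hW.mono fun i j hij => hij.mono (hsupp i) (hsupp j)) φ
  simpa only [map_sub, sub_add_cancel, zero_add] using hnull.add_const (φ h)

end DisjointSupport

section SmallOscillation

variable {K : Type*} [TopologicalSpace K] [CompactSpace K]

lemma exists_finite_isOpen_cover_dist_lt {M : Type*} [PseudoMetricSpace M] {e : K → M}
    (he : Continuous e) {ε : ℝ} (hε : 0 < ε) :
    ∃ 𝒰 : Set (Set K), 𝒰.Finite ∧ (∀ U ∈ 𝒰, IsOpen U) ∧ (∀ U ∈ 𝒰, U.Nonempty) ∧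
      ⋃₀ 𝒰 = univ ∧ ∀ U ∈ 𝒰, ∀ x ∈ U, ∀ y ∈ U, dist (e x) (e y) < ε := by
  let B : K → Set K := fun c => e ⁻¹' Metric.ball (e c) (ε / 2)
  have hB : ∀ c, IsOpen (B c) := fun c => Metric.isOpen_ball.preimage he
  have hmem : ∀ c, c ∈ B c := fun c => Metric.mem_ball_self (half_pos hε)
  obtain ⟨s, hs⟩ := CompactSpace.elim_nhds_subcover B fun c => (hB c).mem_nhds (hmem c)
  refine ⟨B '' s, s.finite_toSet.image B, ?_, ?_, ?_, ?_⟩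
  · exact forall_mem_image.2 fun c _ => hB c
  · exact forall_mem_image.2 fun c _ => ⟨c, hmem c⟩
  · exact sUnion_image B s ▸ hs
  · refine forall_mem_image.2 fun c _ x hx y hy => ?_
    calc dist (e x) (e y) ≤ dist (e x) (e c) + dist (e y) (e c) := dist_triangle_right _ _ _
      _ < ε / 2 + ε / 2 := add_lt_add hx hy
      _ = ε := add_halves ε

lemma exists_finite_isOpen_cover_norm_sub_le {𝕜 : Type*} [NontriviallyNormedField 𝕜]
    [CompleteSpace 𝕜] (E : Submodule 𝕜 C(K, 𝕜)) [FiniteDimensional 𝕜 E] {ε : ℝ} (hε : 0 < ε) :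
    ∃ 𝒰 : Set (Set K), 𝒰.Finite ∧ (∀ U ∈ 𝒰, IsOpen U) ∧ (∀ U ∈ 𝒰, U.Nonempty) ∧
      ⋃₀ 𝒰 = univ ∧ ∀ U ∈ 𝒰, ∀ x ∈ U, ∀ y ∈ U, ∀ f ∈ E, ‖f x - f y‖ ≤ ε * ‖f‖ := by
  let e : K → E →L[𝕜] 𝕜 := fun x => (ContinuousMap.evalCLM 𝕜 x).comp E.subtypeL
  have he : Continuous e := continuous_clm_apply.2 fun f => f.1.continuous
  obtain ⟨𝒰, hfin, hopen, hne, hcover, hosc⟩ := exists_finite_isOpen_cover_dist_lt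
    (M := E →L[𝕜] 𝕜) he hε
  refine ⟨𝒰, hfin, hopen, hne, hcover, fun U hU x hx y hy f hf => ?_⟩
  have hxy : ‖e x - e y‖ ≤ ε := (dist_eq_norm (e x) (e y)).symm.trans_le (hosc U hU x hx y hy).le
  exact (e x - e y).le_of_opNorm_le hxy ⟨f, hf⟩

end SmallOscillation

section Octahedral

variable {K ι : Type*} [TopologicalSpace K] [CompactSpace K]

lemma norm_add_abs_sub_le_norm_add_smul [Nonempty K] {U : ι → Set K} (hcover : ⋃ i, U i = univ)
    {f g : C(K, ℝ)} {δ : ℝ} (hf : ∀ i, ∀ x ∈ U i, ∀ y ∈ U i, |f x - f y| ≤ δ)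
    (hone : ∀ i, ∃ x ∈ U i, g x = 1) (hneg : ∀ i, ∃ x ∈ U i, g x = -1) (l : ℝ) :
    ‖f‖ + |l| - δ ≤ ‖f + l • g‖ := by
  suffices ∀ x, ‖f x‖ ≤ ‖f + l • g‖ - |l| + δ by
    linarith [(ContinuousMap.norm_le_of_nonempty f).2 this]
  intro x
  obtain ⟨i, hx⟩ := iUnion_eq_univ_iff.1 hcover x
  obtain ⟨y, hy, hxy⟩ : ∃ y ∈ U i, |f x + l * g y| = |f x| + |l| := by
    obtain ⟨p, hp, hgp⟩ := hone i
    obtain ⟨q, hq, hgq⟩ := hneg i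
    have habs {a b : ℝ} (hab : 0 ≤ a * b) : |a + b| = |a| + |b| :=
      (abs_add_eq_add_abs_iff a b).2 (mul_nonneg_iff.1 hab)
    obtain hsign | hsign := le_total 0 (f x * l)
    · exact ⟨p, hp, by rw [hgp, mul_one, habs hsign]⟩
    · exact ⟨q, hq, by rw [hgq, mul_neg_one, habs (by linarith), abs_neg]⟩
  have hnorm : |f y + l * g y| ≤ ‖f + l • g‖ := (f + l • g).norm_coe_le_norm y
  have htri : |f x + l * g y| ≤ |f y + l * g y| + |f x - f y| := by
    rw [show f x + l * g y = (f y + l * g y) + (f x - f y) by ring]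
    exact abs_add_le _ _
  rw [Real.norm_eq_abs]
  linarith [hf i x hx y hy]

lemma exists_seq_weak_tendsto_forall_eq_one_forall_eq_neg_one [T2Space K] [PerfectSpace K]
    [Finite ι] {U : ι → Set K} (hU : ∀ i, IsOpen (U i)) (hne : ∀ i, (U i).Nonempty)
    {h : C(K, ℝ)} (hh : ‖h‖ ≤ 1) :
    ∃ g : ℕ → C(K, ℝ), (∀ n, ‖g n‖ ≤ 1) ∧ (∀ n i, ∃ x ∈ U i, g n x = 1) ∧
      (∀ n i, ∃ x ∈ U i, g n x = -1) ∧
      ∀ φ : C(K, ℝ) →L[ℝ] ℝ, Tendsto (fun n => φ (g n)) atTop (𝓝 (φ h)) := by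
  obtain ⟨V, hV, hVne, hVU, hVdisj⟩ := exists_pairwise_disjoint_seq_isOpen_subset
    (U := fun j : ι × Bool => U j.1) (fun j => hU j.1) (fun j => hne j.1)
  choose x hx using hVne
  let W : ℕ → Set K := fun n => ⋃ j, V j n
  let P : Bool → ℕ → Set K := fun b n => range fun i => x (i, b) n
  have hWdisj : Pairwise (Disjoint on W) := fun m n hmn =>
    disjoint_iUnion_left.2 fun j => disjoint_iUnion_right.2 fun k =>
      hVdisj (i := (j, m)) (j := (k, n)) fun heq => hmn (congrArg Prod.snd heq)
  have hPclosed : ∀ b n, IsClosed (P b n) := fun b n => (finite_range _).isClosed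
  have hPW : ∀ b n, P b n ⊆ W n := fun b n =>
    range_subset_iff.2 fun i => mem_iUnion_of_mem (i, b) (hx (i, b) n)
  have hPdisj : ∀ n, Disjoint (P false n) (P true n) := fun n => by
    simp only [P, disjoint_range_iff]
    exact fun i j => (hVdisj (i := ((i, false), n)) (j := ((j, true), n)) (by simp)).ne_of_mem
      (hx _ n) (hx _ n)
  have hIcc : ∀ g : C(K, ℝ), ‖g‖ ≤ 1 ↔ ∀ x, g x ∈ Icc (-1) 1 := fun g => by
    simp only [g.norm_le zero_le_one, Real.norm_eq_abs, abs_le, mem_Icc]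
  choose g hg hgneg hgone hgh using fun n => exists_eqOn_const_eqOn_compl_forall_mem_Icc
    ((hIcc h).1 hh) (hPclosed false n) (hPclosed true n) (hPdisj n)
    (isOpen_iUnion fun j => hV j n) (hPW false n) (hPW true n)
  have hnorm : ∀ n, ‖g n‖ ≤ 1 := fun n => (hIcc (g n)).2 (hg n)
  have hxU : ∀ i b n, x (i, b) n ∈ U i := fun i b n => hVU (i, b) n (hx (i, b) n)
  refine ⟨g, hnorm, fun n i => ⟨x (i, true) n, hxU i true n, hgone n (mem_range_self i)⟩,
    fun n i => ⟨x (i, false) n, hxU i false n, hgneg n (mem_range_self i)⟩, fun φ => ?_⟩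
  rw [← Nat.cofinite_eq_atTop]
  exact tendsto_apply_of_eqOn_compl_of_pairwise_disjoint hnorm hWdisj hgh φ

end Octahedral

/-- for `K` compact Hausdorff without isolated points, a finite-dimensional
subspace `E ⊆ C(K)` and `ε > 0`, the set of unit vectors `g` that are `(1-ε)`-octahedral
with respect to `E` is weakly sequentially dense in the unit ball of `C(K)`. -/
theorem stmt6 {K : Type*} [TopologicalSpace K] [CompactSpace K] [T2Space K] [Nonempty K]
    (hK : ∀ t : K, ¬ IsOpen ({t} : Set K))
    (E : Subspace ℝ C(K, ℝ)) [FiniteDimensional ℝ E] (ε : ℝ) (hε : 0 < ε)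
    (h : C(K, ℝ)) (hh : ‖h‖ ≤ 1) :
    ∃ g : ℕ → C(K, ℝ),
      (∀ n, ‖g n‖ = 1 ∧ ∀ f ∈ E, ∀ l : ℝ, ‖f + l • g n‖ ≥ (1 - ε) * (‖f‖ + |l|)) ∧
      (∀ φ : C(K, ℝ) →L[ℝ] ℝ, Tendsto (fun n => φ (g n)) atTop (nhds (φ h))) := by
  have : PerfectSpace K := perfectSpace_iff_forall_not_isOpen_singleton.2 hK
  obtain ⟨𝒰, hfin, hopen, hne, hcover, hosc⟩ := exists_finite_isOpen_cover_norm_sub_le E hε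
  have : Finite 𝒰 := hfin.to_subtype
  obtain ⟨g, hg, hone, hneg, hlim⟩ := exists_seq_weak_tendsto_forall_eq_one_forall_eq_neg_one
    (U := fun U : 𝒰 => U.1) (fun U => hopen U U.2) (fun U => hne U U.2) hh
  have hcover' : ⋃ U : 𝒰, U.1 = univ := sUnion_eq_iUnion.symm.trans hcover
  refine ⟨g, fun n => ⟨(hg n).antisymm ?_, fun f hf l => ?_⟩, hlim⟩
  · obtain ⟨U, -⟩ := iUnion_eq_univ_iff.1 hcover' (Classical.arbitrary K)
    obtain ⟨x, -, hx⟩ := hone n U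
    simpa [hx] using (g n).norm_coe_le_norm x
  · calc (1 - ε) * (‖f‖ + |l|) ≤ ‖f‖ + |l| - ε * ‖f‖ := by
          linarith [mul_nonneg hε.le (abs_nonneg l)]
      _ ≤ ‖f + l • g n‖ := norm_add_abs_sub_le_norm_add_smul hcover'
          (fun U x hx y hy => hosc U U.2 x hx y hy f hf) (hone n) (hneg n) l
end

section
/- Let (Ω, Σ, μ) be a non-atomic measure space. Then L¹(μ) has the operator Daugavet property: for every f₁,…,fₙ ∈ S_{L¹(μ)}, every slice S of B_{L¹(μ)} and every ε > 0, there exists f ∈ S such that for every f′ ∈ B_{L¹(μ)} there is a bounded linear operator T : L¹(μ) → L¹(μ) with ‖T‖ ≤ 1 + ε, T(f) = f′, and ‖T(fᵢ) − fᵢ‖ < ε for all i. -/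
open MeasureTheory

/-- The operator Daugavet property. -/
def ODP (X : Type*) [NormedAddCommGroup X] [NormedSpace ℝ X] : Prop :=
  ∀ (n : ℕ) (x : Fin n → X), (∀ i, ‖x i‖ = 1) →
    ∀ f : X →L[ℝ] ℝ, f ≠ 0 → ∀ α > (0:ℝ), ∀ ε > (0:ℝ),
      ∃ z : X, ‖z‖ ≤ 1 ∧ f z > ‖f‖ - α ∧
        ∀ x' : X, ‖x'‖ ≤ 1 →
          ∃ T : X →L[ℝ] X, ‖T‖ ≤ 1 + ε ∧ T z = x' ∧ ∀ i, ‖T (x i) - x i‖ < ε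

/-! Cutting `Ω` into `A` and its complement splits `L¹` as an `ℓ¹`-sum, so if `z` is a unit vector
supported on `A` and `ψ` is a norming functional for `z`, then `g ↦ 1_{Aᶜ} g + ψ (1_A g) x'` is a
contraction that sends `z` to `x'` and moves each `xᵢ` by at most `2 ‖1_A xᵢ‖`. The task is thus to
find `z` in the slice, supported on a set `A` so small that all `‖1_A xᵢ‖` are small. Pick `g` with
`φ g > c ‖g‖`. By the Hahn decomposition argument, `φ (1_A g) ≥ c ‖1_A g‖` for all subsets `A` of
some `B` with `1_B g ≠ 0`, and non-atomicity provides such `A` with `1_A g ≠ 0` and `μ A` as small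
as desired; `z` is the normalization of `1_A g`. -/

open Filter Set
open scoped ENNReal Topology

section LProjection

variable {X : Type*} [NormedAddCommGroup X] [NormedSpace ℝ X]

lemma exists_contraction_apply_eq_of_isLprojection {P : X →L[ℝ] X} (hP : IsLprojection X P)
    {z x' : X} (hPz : P z = z) (hz : ‖z‖ = 1) (hx' : ‖x'‖ ≤ 1) :
    ∃ T : X →L[ℝ] X, ‖T‖ ≤ 1 ∧ T z = x' ∧ ∀ x, ‖T x - x‖ ≤ 2 * ‖P x‖ := by
  obtain ⟨ψ, hψ, hψz⟩ := exists_dual_vector'' ℝ z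
  have norm_smul_le_norm (y : X) : ‖ψ y • x'‖ ≤ ‖y‖ :=
    calc ‖ψ y • x'‖ = ‖ψ y‖ * ‖x'‖ := norm_smul _ _
      _ ≤ ‖ψ y‖ := mul_le_of_le_one_right (norm_nonneg _) hx'
      _ ≤ ‖y‖ := ψ.le_of_opNorm_le hψ y |>.trans_eq (one_mul _)
  refine ⟨(1 - P) + (ψ.smulRight x').comp P, ?_, ?_, fun x => ?_⟩
  · refine ContinuousLinearMap.opNorm_le_bound _ zero_le_one fun x => ?_
    calc ‖(1 - P) x + ψ (P x) • x'‖ ≤ ‖(1 - P) x‖ + ‖ψ (P x) • x'‖ := norm_add_le _ _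
      _ ≤ ‖(1 - P) x‖ + ‖P x‖ := by gcongr; exact norm_smul_le_norm _
      _ = 1 * ‖x‖ := by rw [one_mul, add_comm]; exact (hP.Lnorm x).symm
  · simp [hPz, hψz, hz]
  · calc ‖(x - P x) + ψ (P x) • x' - x‖ = ‖ψ (P x) • x' - P x‖ := by congr 1; abel
      _ ≤ ‖ψ (P x) • x'‖ + ‖P x‖ := norm_sub_le _ _
      _ ≤ 2 * ‖P x‖ := by linarith [norm_smul_le_norm (P x)]

lemma ODP_of_exists_isLprojection
    (h : ∀ (n : ℕ) (x : Fin n → X) (f : X →L[ℝ] ℝ), f ≠ 0 → ∀ c < ‖f‖, ∀ ε > 0,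
      ∃ P : X →L[ℝ] X, IsLprojection X P ∧ (∃ y, c * ‖P y‖ < f (P y)) ∧ ∀ i, ‖P (x i)‖ < ε) :
    ODP X := by
  intro n x _ f hf α hα ε hε
  obtain ⟨P, hP, ⟨y, hy⟩, hPx⟩ := h n x f hf (‖f‖ - α) (sub_lt_self _ hα) (ε / 2) (half_pos hε)
  have hPy : 0 < ‖P y‖ := norm_pos_iff.2 fun h0 => by simp [h0] at hy
  have hPP : P (P y) = P y := DFunLike.congr_fun hP.proj.eq y
  have hz : ‖‖P y‖⁻¹ • P y‖ = 1 := norm_smul_inv_norm (𝕜 := ℝ) (norm_pos_iff.1 hPy)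
  refine ⟨‖P y‖⁻¹ • P y, hz.le, ?_, fun x' hx' => ?_⟩
  · rw [map_smul, smul_eq_mul, inv_mul_eq_div]
    exact (lt_div_iff₀ hPy).2 hy
  · obtain ⟨T, hT, hTz, hTx⟩ := exists_contraction_apply_eq_of_isLprojection hP
      (by rw [map_smul, hPP]) hz hx'
    exact ⟨T, by linarith, hTz, fun i => by linarith [hTx (x i), hPx i]⟩

lemma exists_mul_norm_lt_apply {f : X →L[ℝ] ℝ} (hf : f ≠ 0) {c : ℝ} (hc : c < ‖f‖) :
    ∃ z, c * ‖z‖ < f z := by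
  obtain ⟨z, hz⟩ := f.exists_mul_lt_of_lt_opNorm (le_max_right c 0)
    (max_lt hc (norm_pos_iff.2 hf))
  have hcz : c * ‖z‖ < |f z| :=
    (mul_le_mul_of_nonneg_right (le_max_left c 0) (norm_nonneg z)).trans_lt hz
  rcases lt_abs.1 hcz with h | h
  · exact ⟨z, h⟩
  · exact ⟨-z, by simpa using h⟩

end LProjection

section Indicator

variable {Ω E : Type*} [MeasurableSpace Ω] {μ : Measure Ω} {A B : Set Ω}
  [NormedAddCommGroup E] [NormedSpace ℝ E]

section Lp

variable {p : ℝ≥0∞} [Fact (1 ≤ p)]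

/-- Multiplication by the indicator function of a measurable set, as an operator on `Lp`: the
Hölder product with `1_A ∈ L^∞`. -/
noncomputable def lpIndicator (hA : MeasurableSet A) : Lp E p μ →L[ℝ] Lp E p μ :=
  (ContinuousLinearMap.lsmul ℝ ℝ).holderL μ ∞ p p (((memLp_top_const (1 : ℝ)).indicator hA).toLp _)

lemma coeFn_lpIndicator (hA : MeasurableSet A) (g : Lp E p μ) :
    lpIndicator hA g =ᵐ[μ] A.indicator g := by
  filter_upwards [(ContinuousLinearMap.lsmul ℝ ℝ).coeFn_holder (r := p)
    (((memLp_top_const (1 : ℝ)).indicator hA).toLp _) g,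
    ((memLp_top_const (μ := μ) (1 : ℝ)).indicator hA).coeFn_toLp] with x hx h1
  by_cases hxA : x ∈ A <;> simp_all [lpIndicator]

lemma lpIndicator_lpIndicator (hA : MeasurableSet A) (hB : MeasurableSet B) (g : Lp E p μ) :
    lpIndicator hA (lpIndicator hB g) = lpIndicator (hA.inter hB) g := by
  refine Lp.ext ?_
  filter_upwards [coeFn_lpIndicator hA (lpIndicator hB g), coeFn_lpIndicator hB g,
    coeFn_lpIndicator (hA.inter hB) g] with x h1 h2 h3
  by_cases hxA : x ∈ A <;> by_cases hxB : x ∈ B <;> simp [*]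

lemma lpIndicator_union (hAB : Disjoint A B) (hA : MeasurableSet A) (hB : MeasurableSet B)
    (g : Lp E p μ) :
    lpIndicator (hA.union hB) g = lpIndicator hA g + lpIndicator hB g := by
  refine Lp.ext ?_
  filter_upwards [coeFn_lpIndicator hA g, coeFn_lpIndicator hB g,
    coeFn_lpIndicator (hA.union hB) g, Lp.coeFn_add (lpIndicator hA g) (lpIndicator hB g)]
    with x h1 h2 h3 h4
  rw [h4, h3, Pi.add_apply, h1, h2, indicator_union_of_disjoint hAB]

lemma lpIndicator_univ (g : Lp E p μ) : lpIndicator MeasurableSet.univ g = g := by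
  refine Lp.ext ?_
  filter_upwards [coeFn_lpIndicator MeasurableSet.univ g] with x hx
  rw [hx, indicator_univ]

lemma lpIndicator_empty (g : Lp E p μ) : lpIndicator MeasurableSet.empty g = 0 := by
  refine Lp.ext ?_
  filter_upwards [coeFn_lpIndicator MeasurableSet.empty g, Lp.coeFn_zero E p μ] with x hx h0
  rw [hx, h0, indicator_empty, Pi.zero_apply]

lemma lpIndicator_eq_zero_iff (hA : MeasurableSet A) (g : Lp E p μ) :
    lpIndicator hA g = 0 ↔ ∀ᵐ x ∂μ, x ∈ A → g x = 0 := by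
  rw [Lp.eq_zero_iff_ae_eq_zero]
  refine eventually_congr ?_
  filter_upwards [coeFn_lpIndicator hA g] with x hx
  simp [hx]

lemma lpIndicator_biUnion_finset {ι : Type*} {A : ι → Set Ω} (hA : ∀ i, MeasurableSet (A i))
    (hd : Pairwise (Function.onFun Disjoint A)) (s : Finset ι) (g : Lp E p μ) :
    lpIndicator (s.measurableSet_biUnion fun i _ => hA i) g = ∑ i ∈ s, lpIndicator (hA i) g := by
  classical
  induction s using Finset.induction_on with
  | empty => simpa using lpIndicator_empty g
  | insert a s ha ih =>
    have hdisj : Disjoint (A a) (⋃ i ∈ s, A i) :=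
      disjoint_iUnion₂_right.2 fun i hi => hd fun h => ha (h ▸ hi)
    rw [Finset.sum_insert ha, ← ih, ← lpIndicator_union hdisj]
    simp only [Finset.set_biUnion_insert]

end Lp

lemma norm_lpIndicator_one (hA : MeasurableSet A) (g : Lp E 1 μ) :
    ‖lpIndicator hA g‖ = ∫ x in A, ‖g x‖ ∂μ := by
  rw [L1.norm_eq_integral_norm, ← integral_indicator hA]
  refine integral_congr_ae ?_
  filter_upwards [coeFn_lpIndicator hA g] with x hx
  rw [hx, norm_indicator_eq_indicator_norm]

lemma isLprojection_lpIndicator (hA : MeasurableSet A) :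
    IsLprojection (Lp E 1 μ) (lpIndicator hA : Lp E 1 μ →L[ℝ] Lp E 1 μ) where
  proj := by
    ext1 g
    rw [mul_apply_eq_comp, lpIndicator_lpIndicator]
    simp only [inter_self]
  Lnorm g := by
    have hcompl : (1 - lpIndicator hA) g = lpIndicator hA.compl g := by
      have h := lpIndicator_union disjoint_compl_right hA hA.compl g
      simp only [union_compl_self, lpIndicator_univ] at h
      exact sub_eq_of_eq_add' h
    change ‖g‖ = ‖lpIndicator hA g‖ + ‖(1 - lpIndicator hA) g‖
    rw [hcompl, norm_lpIndicator_one, norm_lpIndicator_one, L1.norm_eq_integral_norm,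
      integral_add_compl hA (L1.integrable_coeFn g).norm]

lemma hasSum_lpIndicator_one {A : ℕ → Set Ω} (hA : ∀ i, MeasurableSet (A i))
    (hd : Pairwise (Function.onFun Disjoint A)) (g : Lp E 1 μ) :
    HasSum (fun i => lpIndicator (hA i) g) (lpIndicator (MeasurableSet.iUnion hA) g) := by
  let R (s : Finset ℕ) : Set Ω := (⋃ i, A i) \ ⋃ i ∈ s, A i
  have hS (s : Finset ℕ) : MeasurableSet (⋃ i ∈ s, A i) :=
    s.measurableSet_biUnion fun i _ => hA i
  have hR (s : Finset ℕ) : MeasurableSet (R s) := (MeasurableSet.iUnion hA).diff (hS s)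
  have hR_anti : Antitone R := fun s t hst =>
    sdiff_subset_sdiff_right (biUnion_subset_biUnion_left hst)
  have hR_empty : ⋂ s, R s = ∅ := by
    rw [← sdiff_iUnion, ← iUnion_eq_iUnion_finset, Set.sdiff_self]
  have hsplit (s : Finset ℕ) : lpIndicator (MeasurableSet.iUnion hA) g =
      ∑ i ∈ s, lpIndicator (hA i) g + lpIndicator (hR s) g := by
    rw [← lpIndicator_biUnion_finset hA hd, ← lpIndicator_union disjoint_sdiff_right]
    simp only [union_sdiff_cancel (iUnion₂_subset_iUnion _ _)]
  have hlim : Tendsto (fun s => ∫ x in R s, ‖g x‖ ∂μ) atTop (𝓝 0) := by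
    simpa [hR_empty] using tendsto_setIntegral_of_antitone hR hR_anti
      ⟨∅, (L1.integrable_coeFn g).norm.integrableOn⟩
  rw [HasSum, SummationFilter.unconditional_filter, tendsto_iff_norm_sub_tendsto_zero]
  refine hlim.congr fun s => ?_
  rw [hsplit s, sub_add_cancel_left, norm_neg, norm_lpIndicator_one]

open Classical in
/-- The `L¹`-valued measure `A ↦ 1_A • g`, which a functional turns into a signed measure. As for
every `VectorMeasure`, its value on non-measurable sets is `0`. -/
noncomputable def lpIndicatorVectorMeasure (g : Lp E 1 μ) : VectorMeasure Ω (Lp E 1 μ) where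
  measureOf' A := if hA : MeasurableSet A then lpIndicator hA g else 0
  empty' := by simp [lpIndicator_empty]
  not_measurable' A hA := dif_neg hA
  m_iUnion' A hA hd := by
    simpa [hA, MeasurableSet.iUnion hA] using hasSum_lpIndicator_one hA hd g

lemma lpIndicatorVectorMeasure_apply (g : Lp E 1 μ) (hA : MeasurableSet A) :
    lpIndicatorVectorMeasure g A = lpIndicator hA g :=
  dif_pos hA

-- `A ↦ c * ‖1_A • g‖ - φ (1_A • g)` is a signed measure, negative on `Ω`, so it has a negative set.
lemma exists_forall_subset_mul_norm_lpIndicator_le (φ : Lp E 1 μ →L[ℝ] ℝ) {g : Lp E 1 μ} {c : ℝ}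
    (hg : c * ‖g‖ < φ g) :
    ∃ (B : Set Ω) (hB : MeasurableSet B), lpIndicator hB g ≠ 0 ∧
      ∀ A ⊆ B, ∀ hA : MeasurableSet A, c * ‖lpIndicator hA g‖ ≤ φ (lpIndicator hA g) := by
  let s : SignedMeasure Ω := c • μ.withDensityᵥ (fun x => ‖g x‖) -
    (lpIndicatorVectorMeasure g).mapRange (φ : Lp E 1 μ →+ ℝ) φ.continuous
  have s_apply {A : Set Ω} (hA : MeasurableSet A) :
      s A = c * ‖lpIndicator hA g‖ - φ (lpIndicator hA g) := by
    have hnorm : μ.withDensityᵥ (fun x => ‖g x‖) A = ‖lpIndicator hA g‖ := by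
      rw [withDensityᵥ_apply (L1.integrable_coeFn g).norm hA, norm_lpIndicator_one]
    exact congrArg₂ (fun r y => c * r - φ y) hnorm (lpIndicatorVectorMeasure_apply g hA)
  have hs : s univ < 0 := by
    rw [s_apply MeasurableSet.univ, lpIndicator_univ]
    exact sub_neg.2 hg
  obtain ⟨B, hB, -, hsB, hB_neg⟩ := s.exists_subset_restrict_nonpos hs
  refine ⟨B, hB, fun h0 => ?_, fun A hAB hA => ?_⟩
  · simp [s_apply hB, h0] at hB_neg
  · have hsA : s A ≤ 0 := (VectorMeasure.restrict_le_restrict_iff _ _ hB).1 hsB hA hAB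
    rwa [s_apply hA, sub_nonpos] at hsA

end Indicator

section NoFiniteAtoms

variable {Ω E : Type*} [MeasurableSpace Ω] {μ : Measure Ω} {B : Set Ω}

/-- Non-atomicity on the sets of finite measure, the only ones that `L¹` sees. Atoms of infinite
measure are allowed. -/
def NoFiniteAtoms (μ : Measure Ω) : Prop :=
  ∀ A, MeasurableSet A → 0 < μ A → μ A < ∞ → ∃ B, MeasurableSet B ∧ B ⊆ A ∧ 0 < μ B ∧ μ B < μ A

lemma exists_subset_measure_pos_le_half (hμ : NoFiniteAtoms μ) (hB : MeasurableSet B)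
    (hB_pos : 0 < μ B) (hB_fin : μ B < ∞) :
    ∃ A ⊆ B, MeasurableSet A ∧ 0 < μ A ∧ μ A ≤ μ B / 2 := by
  obtain ⟨C, hC, hCB, hC_pos, hC_lt⟩ := hμ B hB hB_pos hB_fin
  have hdiff : μ (B \ C) = μ B - μ C := measure_sdiff hCB hC.nullMeasurableSet hC_lt.ne_top
  rcases le_total (μ C) (μ B / 2) with h | h
  · exact ⟨C, hCB, hC, hC_pos, h⟩
  · refine ⟨B \ C, sdiff_subset, hB.diff hC, hdiff ▸ tsub_pos_of_lt hC_lt, ?_⟩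
    rw [hdiff, ← ENNReal.sub_half hB_fin.ne]
    exact tsub_le_tsub_left h _

lemma exists_seq_subset_measure_tendsto_zero (hμ : NoFiniteAtoms μ) (hB : MeasurableSet B)
    (hB_pos : 0 < μ B) (hB_fin : μ B < ∞) :
    ∃ A : ℕ → Set Ω, (∀ n, A n ⊆ B ∧ MeasurableSet (A n) ∧ 0 < μ (A n)) ∧
      Tendsto (μ ∘ A) atTop (𝓝 0) := by
  have hpow (n : ℕ) : ∃ A ⊆ B, MeasurableSet A ∧ 0 < μ A ∧ μ A ≤ μ B * 2⁻¹ ^ n := by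
    induction n with
    | zero => exact ⟨B, subset_rfl, hB, hB_pos, by simp⟩
    | succ n ih =>
      obtain ⟨A, hAB, hA, hA_pos, hA_le⟩ := ih
      obtain ⟨C, hCA, hC, hC_pos, hC_le⟩ := exists_subset_measure_pos_le_half hμ hA hA_pos
        ((measure_mono hAB).trans_lt hB_fin)
      refine ⟨C, hCA.trans hAB, hC, hC_pos, hC_le.trans ?_⟩
      rw [pow_succ, ← mul_assoc, ENNReal.div_eq_inv_mul, mul_comm]
      gcongr
  choose A hAB hA hA_pos hA_le using hpow
  refine ⟨A, fun n => ⟨hAB n, hA n, hA_pos n⟩, ?_⟩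
  have hlim : Tendsto (fun n : ℕ => μ B * 2⁻¹ ^ n) atTop (𝓝 0) := by
    simpa using ENNReal.Tendsto.const_mul
      (ENNReal.tendsto_pow_atTop_nhds_zero_of_lt_one (ENNReal.inv_lt_one.2 ENNReal.one_lt_two))
      (Or.inr hB_fin.ne)
  exact tendsto_of_tendsto_of_tendsto_of_le_of_le tendsto_const_nhds hlim (fun _ => zero_le) hA_le

lemma exists_subset_measure_pos_lt_top [Zero E] [TopologicalSpace E] [T2Space E]
    {f : Ω → E} (hf : FinStronglyMeasurable f μ) (hB : MeasurableSet B) (hB_pos : 0 < μ B)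
    (hfB : ∀ x ∈ B, f x ≠ 0) :
    ∃ A ⊆ B, MeasurableSet A ∧ 0 < μ A ∧ μ A < ∞ := by
  obtain ⟨t, -, hft, ht⟩ := hf.exists_set_sigmaFinite
  have hBt : B ⊆ t := fun x hx => by_contra fun hxt => hfB x hx (hft x hxt)
  rw [← Measure.restrict_eq_self μ hBt] at hB_pos
  obtain ⟨A, hA, hAB, hA_pos, hA_fin⟩ := Measure.exists_subset_measure_lt_top hB hB_pos
  rw [Measure.restrict_eq_self μ (hAB.trans hBt)] at hA_pos hA_fin
  exact ⟨A, hAB, hA, hA_pos, hA_fin⟩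

variable [NormedAddCommGroup E] [NormedSpace ℝ E]

lemma exists_subset_norm_lpIndicator_lt (hμ : NoFiniteAtoms μ) {ι : Type*} [Finite ι]
    (x : ι → Lp E 1 μ) {g : Lp E 1 μ} (hB : MeasurableSet B) (hg : lpIndicator hB g ≠ 0)
    {ε : ℝ} (hε : 0 < ε) :
    ∃ A ⊆ B, ∃ hA : MeasurableSet A, lpIndicator hA g ≠ 0 ∧ ∀ i, ‖lpIndicator hA (x i)‖ < ε := by
  let C : Set Ω := B ∩ {ω | g ω ≠ 0}
  have hC : MeasurableSet C := hB.inter (Lp.stronglyMeasurable g).measurableSet_support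
  have hC_pos : 0 < μ C := by
    refine pos_iff_ne_zero.2 fun h0 => hg ((lpIndicator_eq_zero_iff hB g).2 ?_)
    filter_upwards [measure_eq_zero_iff_ae_notMem.1 h0] with ω hω hωB
    exact by_contra fun hgω => hω ⟨hωB, hgω⟩
  obtain ⟨D, hDC, hD, hD_pos, hD_fin⟩ := exists_subset_measure_pos_lt_top
    (Lp.finStronglyMeasurable g one_ne_zero ENNReal.one_ne_top) hC hC_pos fun _ hω => hω.2
  obtain ⟨A, hA, hA_lim⟩ := exists_seq_subset_measure_tendsto_zero hμ hD hD_pos hD_fin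
  have hsmall : ∀ᶠ n in atTop, ∀ i, ‖lpIndicator (hA n).2.1 (x i)‖ < ε := by
    simp only [norm_lpIndicator_one]
    exact eventually_all.2 fun i =>
      ((L1.integrable_coeFn (x i)).norm.tendsto_setIntegral_nhds_zero hA_lim).eventually_lt_const hε
  obtain ⟨n, hn⟩ := hsmall.exists
  obtain ⟨hAD, hA_meas, hA_pos⟩ := hA n
  refine ⟨A n, hAD.trans (hDC.trans inter_subset_left), hA_meas, fun h0 => hA_pos.ne' ?_, hn⟩
  rw [measure_eq_zero_iff_ae_notMem]
  filter_upwards [(lpIndicator_eq_zero_iff hA_meas g).1 h0] with ω hω hωA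
  exact (hDC (hAD hωA)).2 (hω hωA)

theorem stmt10_general (hμ : NoFiniteAtoms μ) : ODP (Lp E 1 μ) := by
  refine ODP_of_exists_isLprojection fun n x f hf c hc ε hε => ?_
  obtain ⟨c', hcc', hc'⟩ := exists_between hc
  obtain ⟨g, hg⟩ := exists_mul_norm_lt_apply hf hc'
  obtain ⟨B, hB, hgB, hB_le⟩ := exists_forall_subset_mul_norm_lpIndicator_le f hg
  obtain ⟨A, hAB, hA, hgA, hAx⟩ := exists_subset_norm_lpIndicator_lt hμ x hB hgB hε
  refine ⟨lpIndicator hA, isLprojection_lpIndicator hA, ⟨g, ?_⟩, hAx⟩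
  calc c * ‖lpIndicator hA g‖ < c' * ‖lpIndicator hA g‖ :=
        mul_lt_mul_of_pos_right hcc' (norm_pos_iff.2 hgA)
    _ ≤ f (lpIndicator hA g) := hB_le A hAB hA

end NoFiniteAtoms

/-- if `μ` is non-atomic then `L¹(μ)` has the operator Daugavet property. -/
theorem stmt10 {Ω : Type*} [MeasurableSpace Ω] (μ : Measure Ω)
    (hnonatomic : ∀ A : Set Ω, MeasurableSet A → 0 < μ A →
      ∃ B : Set Ω, MeasurableSet B ∧ B ⊆ A ∧ 0 < μ B ∧ μ B < μ A) :
    ODP (Lp ℝ 1 μ) :=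
  stmt10_general fun A hA hA_pos _ => hnonatomic A hA hA_pos
end

section
/- Let X and Y be Banach spaces and suppose X ⊗̂_π Y has the Daugavet property. Then for every finite-dimensional subspace E ⊆ X ⊗̂_π Y, every slice S of B_{X ⊗̂_π Y}, every T ∈ L(X, Y*) and every ε > 0, there exist x ∈ S_X, y ∈ S_Y with x ⊗ y ∈ S and G ∈ L(X, Y*) such that G agrees with T on E, G(x)(y) = ‖T‖ and ‖G‖ ≤ (1 − ε)⁻¹‖T‖. -/
/-! Let `Z = X ⊗̂_π Y`. Its unit ball is the closed convex hull of the elementary tensors, so every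
slice contains one of them. By the Daugavet property the given slice can be shrunk to one whose
elements `v` are almost `ℓ₁`-orthogonal to `E`: `(1 - ε) (‖e‖ + |c|) ≤ ‖e + c v‖` for all `e ∈ E`.
For an elementary tensor `v` in the smaller slice, the functional `e + c v ↦ T e + c ‖T‖` on
`E + ℝ v` then has norm at most `(1 - ε)⁻¹ ‖T‖`, and a Hahn–Banach extension of it is the required
`G`. -/

open Metric

section Extension

variable {𝕜 : Type*} [RCLike 𝕜] {Z : Type*} [SeminormedAddCommGroup Z] [NormedSpace 𝕜 Z]

lemma exists_dual_comp_eq_of_norm_le {V : Type*} [AddCommGroup V] [Module 𝕜 V] (L : V →ₗ[𝕜] Z)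
    (φ : V →ₗ[𝕜] 𝕜) {C : ℝ} (hC : 0 ≤ C) (h : ∀ p, ‖φ p‖ ≤ C * ‖L p‖) :
    ∃ G : Z →L[𝕜] 𝕜, (∀ p, G (L p) = φ p) ∧ ‖G‖ ≤ C := by
  obtain ⟨s, hs⟩ := L.rangeRestrict.exists_rightInverse_of_surjective L.range_rangeRestrict
  have hLs (x : L.range) : L (s x) = x := congr_arg Subtype.val (LinearMap.congr_fun hs x)
  obtain ⟨G, hG, hGnorm⟩ := exists_extension_norm_eq _
    ((φ ∘ₗ s).mkContinuous C fun x ↦ by simpa [hLs] using h (s x))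
  refine ⟨G, fun p ↦ ?_, hGnorm ▸ LinearMap.mkContinuous_norm_le _ hC _⟩
  have hker : φ (s (L.rangeRestrict p) - p) = 0 := by
    simpa [hLs] using h (s (L.rangeRestrict p) - p)
  calc G (L p) = φ (s (L.rangeRestrict p)) := hG (L.rangeRestrict p)
    _ = φ p := by rwa [map_sub, sub_eq_zero] at hker

lemma exists_dual_eqOn_and_apply_eq (E : Submodule 𝕜 Z) (v : Z) {C : ℝ}
    (h : ∀ e ∈ E, ∀ c : 𝕜, ‖e‖ + ‖c‖ ≤ C * ‖e + c • v‖) (g : Z →L[𝕜] 𝕜) {r : 𝕜}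
    (hr : ‖r‖ ≤ ‖g‖) :
    ∃ G : Z →L[𝕜] 𝕜, Set.EqOn G g E ∧ G v = r ∧ ‖G‖ ≤ C * ‖g‖ := by
  have hC : 0 < C := by
    have hv : 1 ≤ C * ‖v‖ := by simpa using h 0 E.zero_mem 1
    exact pos_of_mul_pos_left (one_pos.trans_le hv) (norm_nonneg v)
  let L : E × 𝕜 →ₗ[𝕜] Z := E.subtype.coprod (LinearMap.toSpanSingleton 𝕜 Z v)
  let φ : E × 𝕜 →ₗ[𝕜] 𝕜 := (g.toLinearMap ∘ₗ E.subtype).coprod (LinearMap.toSpanSingleton 𝕜 𝕜 r)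
  have hφ (p : E × 𝕜) : ‖φ p‖ ≤ C * ‖g‖ * ‖L p‖ :=
    calc ‖φ p‖ = ‖g p.1 + p.2 * r‖ := by simp [φ]
      _ ≤ ‖g p.1‖ + ‖p.2 * r‖ := norm_add_le _ _
      _ ≤ ‖g‖ * ‖(p.1 : Z)‖ + ‖p.2‖ * ‖g‖ := by
        rw [norm_mul]
        gcongr
        exact g.le_opNorm _
      _ = ‖g‖ * (‖(p.1 : Z)‖ + ‖p.2‖) := by ring
      _ ≤ ‖g‖ * (C * ‖(p.1 : Z) + p.2 • v‖) := by
        gcongr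
        exact h p.1 p.1.2 p.2
      _ = C * ‖g‖ * ‖L p‖ := by
        rw [mul_left_comm, ← mul_assoc]
        simp [L]
  obtain ⟨G, hG, hGnorm⟩ := exists_dual_comp_eq_of_norm_le L φ (by positivity) hφ
  refine ⟨G, fun e he ↦ ?_, ?_, hGnorm⟩
  · simpa [L, φ] using hG (⟨e, he⟩, 0)
  · simpa [L, φ] using hG (0, 1)

end Extension

lemma one_sub_mul_add_le_norm_smul_add_smul {Z : Type*} [SeminormedAddCommGroup Z]
    [NormedSpace ℝ Z] {z v : Z} {ε a b : ℝ} (hz : ‖z‖ ≤ 1) (hv : ‖v‖ ≤ 1)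
    (hzv : 2 - ε ≤ ‖z + v‖) (ha : 0 ≤ a) (hb : 0 ≤ b) :
    (1 - ε) * (a + b) ≤ ‖a • z + b • v‖ := by
  wlog hba : b ≤ a generalizing z v a b
  · rw [add_comm a, add_comm (a • z)]
    exact this hv hz (by rwa [add_comm]) hb ha (le_of_not_ge hba)
  have hε : 0 ≤ ε := by linarith [norm_add_le z v]
  calc (1 - ε) * (a + b) ≤ a * (2 - ε) - (a - b) * 1 := by linarith [mul_nonneg hε hb]
    _ ≤ a * ‖z + v‖ - (a - b) * ‖v‖ := by gcongr
    _ = ‖a • (z + v)‖ - ‖(a - b) • v‖ := by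
      rw [norm_smul_of_nonneg ha, norm_smul_of_nonneg (sub_nonneg.2 hba)]
    _ ≤ ‖a • (z + v) - (a - b) • v‖ := norm_sub_norm_le _ _
    _ = ‖a • z + b • v‖ := by congr 1; module

lemma apply_le_opNorm_of_norm_le_one {Z : Type*} [SeminormedAddCommGroup Z] [NormedSpace ℝ Z]
    (F : Z →L[ℝ] ℝ) {z : Z} (hz : ‖z‖ ≤ 1) : F z ≤ ‖F‖ :=
  (le_abs_self _).trans (F.unit_le_opNorm z hz)

section Slice

variable {Z : Type*} [NormedAddCommGroup Z] [NormedSpace ℝ Z]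

/-- A slice of the closed unit ball: its intersection with an open half-space that it meets.
The functional is normalized, so that `c = 1 - α` for a slice of depth `α > 0`. -/
def IsUnitBallSlice (S : Set Z) : Prop :=
  ∃ F : Z →L[ℝ] ℝ, ‖F‖ = 1 ∧ ∃ c < 1, S = {z | ‖z‖ ≤ 1 ∧ c < F z}

lemma isUnitBallSlice_setOf_lt {F : Z →L[ℝ] ℝ} (hF : F ≠ 0) {c : ℝ} (hc : c < ‖F‖) :
    IsUnitBallSlice {z | ‖z‖ ≤ 1 ∧ c < F z} := by
  have hF' : 0 < ‖F‖ := norm_pos_iff.2 hF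
  refine ⟨‖F‖⁻¹ • F, norm_smul_inv_norm hF, ‖F‖⁻¹ * c, (inv_mul_lt_one₀ hF').2 hc, ?_⟩
  simp [hF']

namespace IsUnitBallSlice

variable {S : Set Z}

lemma norm_le_one (hS : IsUnitBallSlice S) {z : Z} (hz : z ∈ S) : ‖z‖ ≤ 1 := by
  obtain ⟨F, -, c, -, rfl⟩ := hS
  exact hz.1

lemma nonempty (hS : IsUnitBallSlice S) : S.Nonempty := by
  obtain ⟨F, hF, c, hc, rfl⟩ := hS
  obtain ⟨z, hz, hcz⟩ := F.exists_lt_apply_of_lt_opNorm (hc.trans_eq hF.symm)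
  rcases lt_abs.1 hcz with hcz | hcz
  · exact ⟨z, hz.le, hcz⟩
  · exact ⟨-z, by simpa using hz.le, by simpa using hcz⟩

lemma nontrivial (hS : IsUnitBallSlice S) : Nontrivial Z := by
  obtain ⟨F, hF, -⟩ := hS
  by_contra! hZ
  simp [Subsingleton.elim F 0] at hF

lemma inter_nonempty_of_closedBall_eq (hS : IsUnitBallSlice S) {A : Set Z}
    (hA : closedBall (0 : Z) 1 = closure (convexHull ℝ A)) : (A ∩ S).Nonempty := by
  obtain ⟨z, hz⟩ := hS.nonempty
  obtain ⟨F, -, c, -, rfl⟩ := hS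
  by_contra hAS
  have hball : closedBall (0 : Z) 1 ⊆ {z | F z ≤ c} := by
    rw [hA]
    refine closure_minimal (convexHull_min (fun a ha ↦ ?_) ?_)
      (isClosed_le F.continuous continuous_const)
    · have ha1 : a ∈ closedBall (0 : Z) 1 := hA ▸ subset_closure (subset_convexHull ℝ A ha)
      exact not_lt.1 fun hca ↦ hAS ⟨a, ha, mem_closedBall_zero_iff.1 ha1, hca⟩
    · exact convex_halfSpace_le F.isBoundedLinearMap.toIsLinearMap c
  exact (hball (mem_closedBall_zero_iff.2 hz.1)).not_gt hz.2

end IsUnitBallSlice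

variable (Z) in
/-- The Daugavet property, expressed through slices of the unit ball instead of the Daugavet
equation `‖1 + T‖ = 1 + ‖T‖` for rank-one operators `T`. -/
def DaugavetProperty : Prop :=
  ∀ z : Z, ‖z‖ = 1 → ∀ S : Set Z, IsUnitBallSlice S → ∀ ε > (0 : ℝ), ∃ w ∈ S, 2 - ε < ‖z + w‖

lemma daugavetProperty_iff :
    DaugavetProperty Z ↔
      ∀ ε > (0 : ℝ), ∀ z : Z, ‖z‖ = 1 → ∀ F : Z →L[ℝ] ℝ, F ≠ 0 → ∀ α > (0 : ℝ),
        ∃ w : Z, ‖w‖ ≤ 1 ∧ F w > ‖F‖ - α ∧ ‖z + w‖ > 2 - ε := by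
  refine ⟨fun hZ ε hε z hz F hF α hα ↦ ?_, ?_⟩
  · obtain ⟨w, ⟨hw, hFw⟩, hzw⟩ :=
      hZ z hz _ (isUnitBallSlice_setOf_lt hF (sub_lt_self ‖F‖ hα)) ε hε
    exact ⟨w, hw, hFw, hzw⟩
  · rintro h z hz _ ⟨F, hF, c, hc, rfl⟩ ε hε
    obtain ⟨w, hw, hFw, hzw⟩ :=
      h ε hε z hz F (norm_ne_zero_iff.1 (hF ▸ one_ne_zero)) (1 - c) (sub_pos.2 hc)
    exact ⟨w, ⟨hw, by rwa [hF, sub_sub_cancel] at hFw⟩, hzw⟩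

namespace DaugavetProperty

variable {S : Set Z} {ε : ℝ}

lemma exists_subslice_lt_norm_add (hZ : DaugavetProperty Z) (hS : IsUnitBallSlice S) {z : Z}
    (hz : ‖z‖ = 1) (hε : 0 < ε) : ∃ R ⊆ S, IsUnitBallSlice R ∧ ∀ v ∈ R, 2 - ε < ‖z + v‖ := by
  obtain ⟨F, hF, c, hc, rfl⟩ := hS
  obtain ⟨δ, hδ, hδ1, hδε, hδc⟩ : ∃ δ > 0, δ < 1 ∧ δ < ε / 3 ∧ δ < (1 - c) / 2 := by
    simp only [← lt_min_iff]
    exact exists_between (by simp [hε, hc])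
  obtain ⟨w, ⟨hw, hFw⟩, hzw⟩ := hZ z hz {w | ‖w‖ ≤ 1 ∧ 1 - δ < F w}
    ⟨F, hF, 1 - δ, by linarith, rfl⟩ δ hδ
  obtain ⟨f, hf, hfzw⟩ := exists_dual_vector ℝ (z + w) (by linarith)
  have hFle {v : Z} (hv : ‖v‖ ≤ 1) : F v ≤ 1 := hF ▸ apply_le_opNorm_of_norm_le_one F hv
  have hfle {v : Z} (hv : ‖v‖ ≤ 1) : f v ≤ 1 := hf ▸ apply_le_opNorm_of_norm_le_one f hv
  have hfzw' : 2 - δ < f z + f w := by rwa [← map_add, hfzw]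
  have hnorm : 2 - 2 * δ < ‖F + f‖ :=
    calc 2 - 2 * δ < F w + f w := by linarith [hfle hz.le]
      _ ≤ ‖F + f‖ := apply_le_opNorm_of_norm_le_one (F + f) hw
  -- Both functionals are at most `1` on the ball, so if `F + f` is near `2`, both are near `1`.
  refine ⟨{v | ‖v‖ ≤ 1 ∧ 2 - 2 * δ < F v + f v}, fun v ⟨hv, hFfv⟩ ↦ ⟨hv, ?_⟩,
    isUnitBallSlice_setOf_lt (norm_pos_iff.1 (by linarith)) hnorm, fun v ⟨hv, hFfv⟩ ↦ ?_⟩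
  · linarith [hfle hv]
  · calc 2 - ε < f z + f v := by linarith [hFle hv, hfle hw]
      _ = f (z + v) := (map_add f z v).symm
      _ ≤ ‖z + v‖ := (le_abs_self _).trans (by simpa [hf] using f.le_opNorm (z + v))

lemma exists_subslice_lt_norm_add_of_finite (hZ : DaugavetProperty Z) (hS : IsUnitBallSlice S)
    {N : Set Z} (hN : N.Finite) (hN1 : ∀ z ∈ N, ‖z‖ = 1) (hε : 0 < ε) :
    ∃ R ⊆ S, IsUnitBallSlice R ∧ ∀ z ∈ N, ∀ v ∈ R, 2 - ε < ‖z + v‖ := by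
  induction N, hN using Set.Finite.induction_on with
  | empty => exact ⟨S, subset_rfl, hS, by simp⟩
  | @insert z N _ _ ih =>
    rw [Set.forall_mem_insert] at hN1
    obtain ⟨Q, hQS, hQ, hNQ⟩ := ih hN1.2
    obtain ⟨R, hRQ, hR, hzR⟩ := hZ.exists_subslice_lt_norm_add hQ hN1.1 hε
    exact ⟨R, hRQ.trans hQS, hR,
      Set.forall_mem_insert.2 ⟨hzR, fun y hy v hv ↦ hNQ y hy v (hRQ hv)⟩⟩

lemma exists_subslice_lt_norm_add_of_totallyBounded (hZ : DaugavetProperty Z)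
    (hS : IsUnitBallSlice S) {K : Set Z} (hK : TotallyBounded K) (hK1 : ∀ z ∈ K, ‖z‖ = 1)
    (hε : 0 < ε) :
    ∃ R ⊆ S, IsUnitBallSlice R ∧ ∀ z ∈ K, ∀ v ∈ R, 2 - ε < ‖z + v‖ := by
  obtain ⟨N, hNK, hN, hcover⟩ := finite_approx_of_totallyBounded hK (ε / 2) (half_pos hε)
  obtain ⟨R, hRS, hR, hNR⟩ :=
    hZ.exists_subslice_lt_norm_add_of_finite hS hN (fun z hz ↦ hK1 z (hNK hz)) (half_pos hε)
  refine ⟨R, hRS, hR, fun z hz v hv ↦ ?_⟩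
  obtain ⟨y, hyN, hzy⟩ := Set.mem_iUnion₂.1 (hcover hz)
  rw [mem_ball'] at hzy
  have htriangle : ‖y + v‖ ≤ dist y z + ‖z + v‖ :=
    calc ‖y + v‖ = ‖(y - z) + (z + v)‖ := by congr 1; abel
      _ ≤ dist y z + ‖z + v‖ := by rw [dist_eq_norm]; exact norm_add_le _ _
  linarith [hNR y hyN v hv]

lemma exists_subslice_le_norm_add_smul (hZ : DaugavetProperty Z) (hS : IsUnitBallSlice S)
    (E : Submodule ℝ Z) [FiniteDimensional ℝ E] (hε : 0 < ε) :
    ∃ R ⊆ S, IsUnitBallSlice R ∧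
      ∀ e ∈ E, ∀ v ∈ R, ∀ c : ℝ, (1 - ε) * (‖e‖ + ‖c‖) ≤ ‖e + c • v‖ := by
  have := hS.nontrivial
  obtain ⟨z₀, hz₀⟩ := exists_norm_eq Z zero_le_one
  -- The extra vector `z₀` supplies a direction for `e = 0` when `E` is trivial.
  let K : Set Z := insert z₀ (E.subtype '' sphere 0 1)
  have hK : IsCompact K := ((isCompact_sphere _ _).image E.subtypeL.continuous).insert z₀
  have hK1 : ∀ z ∈ K, ‖z‖ = 1 := by simp +contextual [K, hz₀]
  have hdir {e : Z} (he : e ∈ E) : ∃ z ∈ K, ‖e‖ • z = e := by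
    rcases eq_or_ne e 0 with rfl | he0
    · exact ⟨z₀, Set.mem_insert _ _, by simp⟩
    · exact ⟨‖e‖⁻¹ • e, Or.inr ⟨⟨_, E.smul_mem _ he⟩, by simp [norm_smul, he0], rfl⟩,
        smul_inv_smul₀ (norm_ne_zero_iff.2 he0) e⟩
  obtain ⟨R, hRS, hR, hKR⟩ :=
    hZ.exists_subslice_lt_norm_add_of_totallyBounded hS hK.totallyBounded hK1 hε
  refine ⟨R, hRS, hR, fun e he v hv c ↦ ?_⟩
  have hnonneg {e : Z} (he : e ∈ E) {c : ℝ} (hc : 0 ≤ c) :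
      (1 - ε) * (‖e‖ + c) ≤ ‖e + c • v‖ := by
    obtain ⟨z, hzK, hze⟩ := hdir he
    simpa only [hze] using one_sub_mul_add_le_norm_smul_add_smul (hK1 z hzK).le
      (hR.norm_le_one hv) (hKR z hzK v hv).le (norm_nonneg e) hc
  rcases le_total 0 c with hc | hc
  · simpa only [Real.norm_of_nonneg hc] using hnonneg he hc
  · have hneg := hnonneg (E.neg_mem he) (neg_nonneg.2 hc)
    rwa [norm_neg, neg_smul, ← neg_add, norm_neg, ← Real.norm_of_nonpos hc] at hneg

end DaugavetProperty

theorem stmt17_general (hZ : DaugavetProperty Z) {A : Set Z}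
    (hA : closedBall (0 : Z) 1 = closure (convexHull ℝ A)) (E : Submodule ℝ Z)
    [FiniteDimensional ℝ E] {S : Set Z} (hS : IsUnitBallSlice S) (g : Z →L[ℝ] ℝ) {ε : ℝ}
    (hε : 0 < ε) (hε1 : ε < 1) :
    ∃ a ∈ A, a ∈ S ∧
      ∃ G : Z →L[ℝ] ℝ, Set.EqOn G g E ∧ G a = ‖g‖ ∧ ‖G‖ ≤ (1 - ε)⁻¹ * ‖g‖ := by
  obtain ⟨R, hRS, hR, hER⟩ := hZ.exists_subslice_le_norm_add_smul hS E hε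
  obtain ⟨a, haA, haR⟩ := hR.inter_nonempty_of_closedBall_eq hA
  exact ⟨a, haA, hRS haR, exists_dual_eqOn_and_apply_eq E a
    (fun e he c ↦ (le_inv_mul_iff₀ (sub_pos.2 hε1)).2 (hER e he a haR c)) g (norm_norm g).le⟩

end Slice

/-- abstract formulation of the projective tensor product `Z = X ⊗̂_π Y`
(as in Statement 14). If `Z` has the Daugavet property, then every `T ∈ L(X, Y*)` can be
extended from a finite-dimensional subspace `E` to `G` with `‖G‖ ≤ (1-ε)⁻¹‖T‖` attaining
the value `‖T‖` at an elementary tensor of any prescribed slice. -/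
theorem stmt17 {X Y Z : Type*}
    [NormedAddCommGroup X] [NormedSpace ℝ X] [CompleteSpace X]
    [NormedAddCommGroup Y] [NormedSpace ℝ Y] [CompleteSpace Y]
    [NormedAddCommGroup Z] [NormedSpace ℝ Z] [CompleteSpace Z]
    (t : X →L[ℝ] Y →L[ℝ] Z)
    (hball : Metric.closedBall (0 : Z) 1 =
      closure (convexHull ℝ {z : Z | ∃ x y, ‖x‖ = 1 ∧ ‖y‖ = 1 ∧ z = t x y}))
    (ι : (X →L[ℝ] Y →L[ℝ] ℝ) ≃ₗᵢ[ℝ] (Z →L[ℝ] ℝ))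
    (hι : ∀ (G : X →L[ℝ] Y →L[ℝ] ℝ) (x : X) (y : Y), ι G (t x y) = G x y)
    (hDP : ∀ ε > (0:ℝ), ∀ z : Z, ‖z‖ = 1 → ∀ F : Z →L[ℝ] ℝ, F ≠ 0 → ∀ α > (0:ℝ),
      ∃ w : Z, ‖w‖ ≤ 1 ∧ F w > ‖F‖ - α ∧ ‖z + w‖ > 2 - ε) :
    ∀ (E : Subspace ℝ Z), FiniteDimensional ℝ E →
      ∀ F : Z →L[ℝ] ℝ, F ≠ 0 → ∀ α > (0:ℝ),
      ∀ T : X →L[ℝ] Y →L[ℝ] ℝ, ∀ ε : ℝ, 0 < ε → ε < 1 →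
      ∃ (x : X) (y : Y) (G : X →L[ℝ] Y →L[ℝ] ℝ),
        ‖x‖ = 1 ∧ ‖y‖ = 1 ∧ ‖t x y‖ ≤ 1 ∧ F (t x y) > ‖F‖ - α ∧
        (∀ e ∈ E, ι G e = ι T e) ∧ G x y = ‖T‖ ∧ ‖G‖ ≤ (1 - ε)⁻¹ * ‖T‖ := by
  intro E _ F hF α hα T ε hε hε1
  obtain ⟨_, ⟨x, y, hx, hy, rfl⟩, ⟨hxy, hFxy⟩, g, hgE, hgxy, hg⟩ :=
    stmt17_general (daugavetProperty_iff.2 hDP) hball E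
      (isUnitBallSlice_setOf_lt hF (sub_lt_self ‖F‖ hα)) (ι T) hε hε1
  exact ⟨x, y, ι.symm g, hx, hy, hxy, hFxy, by simpa [Set.EqOn] using hgE,
    by rw [← hι, ι.apply_symm_apply, hgxy, ι.norm_map], by rwa [ι.symm.norm_map, ← ι.norm_map T]⟩
end
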